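/- With Λ^(q) the q×q matrix whose columns are α_1,…,α_{q−2}, β_1, β_2 (in this order), one has (Λ^(q))ᵀ·M^(q)·Λ^(q) = D^(q), where D^(q) is the diagonal matrix diag(1, 1, …, 1, m_1, m_2) whose first q−2 diagonal entries equal 1 and whose last two diagonal entries are m_1 = λ_1 + 1 and m_2 = λ_2 + 1. -/

import Mathlib

open Real Finset Matrix

noncomputable section

/-- `λ_j = ((μ−1) + (−1)^{j+1}·√(μ²−(4/q−2)μ+1))/2` for `j ∈ {1,2}`. -/
def lamJ (q : ℕ) (μ : ℝ) (j : ℕ) : ℝ :=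
  ((μ - 1) + (-1 : ℝ) ^ (j + 1) * Real.sqrt (μ ^ 2 - (4 / (q : ℝ) - 2) * μ + 1)) / 2

/-- `m_j = λ_j + 1`. -/
def mJ (q : ℕ) (μ : ℝ) (j : ℕ) : ℝ := lamJ q μ j + 1

/-- `x_j = 1 − q·m_j`. -/
def xJ (q : ℕ) (μ : ℝ) (j : ℕ) : ℝ := 1 - (q : ℝ) * mJ q μ j

/-- `α_i ∈ ℝ^q` (1-based `i` and 1-based coordinate index as in the paper). -/
def alphaVec (q i : ℕ) : Fin q → ℝ :=
  fun k => (Real.sqrt ((i : ℝ) * ((i : ℝ) + 1)))⁻¹ *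
    (if (k : ℕ) + 1 < i + 1 then 1
     else if (k : ℕ) + 1 = i + 1 then -(i : ℝ)
     else 0)

/-- `β_j ∈ ℝ^q`, with `β_{j,k} = (q−1+x_j²)^{−1/2}·(1 if k ≠ q; x_j if k = q)`. -/
def betaVec (q : ℕ) (μ : ℝ) (j : ℕ) : Fin q → ℝ :=
  fun k => (Real.sqrt ((q : ℝ) - 1 + xJ q μ j ^ 2))⁻¹ *
    (if (k : ℕ) + 1 = q then xJ q μ j else 1)

/-- The matrix `Λ^(q)` whose columns are `α_1, …, α_{q−2}, β_1, β_2` in this order. -/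
def LambdaMat (q : ℕ) (μ : ℝ) : Matrix (Fin q) (Fin q) ℝ :=
  Matrix.of fun k c =>
    if (c : ℕ) < q - 2 then alphaVec q ((c : ℕ) + 1) k
    else if (c : ℕ) = q - 2 then betaVec q μ 1 k
    else betaVec q μ 2 k

/-- The matrix `M^(q)` with entries `M_{ij} = δ_{ij} − 1/q + μ·δ_{iq}δ_{jq}`. -/
def Mmat (q : ℕ) (μ : ℝ) : Matrix (Fin q) (Fin q) ℝ :=
  Matrix.of fun i j =>
    (if i = j then (1 : ℝ) else 0) - 1 / (q : ℝ)
      + if (i : ℕ) + 1 = q ∧ (j : ℕ) + 1 = q then μ else 0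

/-- The diagonal matrix `D^(q) = diag(1, …, 1, m_1, m_2)` whose first `q−2`
diagonal entries equal `1` and whose last two diagonal entries are `m_1` and `m_2`. -/
def Dmat (q : ℕ) (μ : ℝ) : Matrix (Fin q) (Fin q) ℝ :=
  Matrix.diagonal fun k =>
    if (k : ℕ) < q - 2 then 1
    else if (k : ℕ) = q - 2 then mJ q μ 1
    else mJ q μ 2

/-!
The columns of `Λ` form an orthonormal basis of eigenvectors of `M`, with the diagonal entries of
`D` as eigenvalues. On vectors with coordinate sum zero and last coordinate zero, `M` acts as the
identity, and this subspace contains the `α_i`. Its orthogonal complement is spanned by the vectors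
`(1, …, 1, x)`, and `(1, …, 1, 1 - q m)` is an eigenvector with eigenvalue `m` exactly when
`q m (1 + μ - m) = μ`. The roots of this quadratic are `m_1` and `m_2`, and Vieta's formulas turn
`⟨(1, …, 1, x_1), (1, …, 1, x_2)⟩ = q - 1 + x_1 x_2` into `0`.
-/

theorem transpose_mul_mul_eq_diagonal {m n R : Type*} [Fintype m] [DecidableEq n] [CommSemiring R]
    {P : Matrix m n R} {A : Matrix m m R} {d : n → R}
    (hnorm : ∀ j, P.col j ⬝ᵥ P.col j = 1)
    (horth : Pairwise fun i j ↦ P.col i ⬝ᵥ P.col j = 0)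
    (heigen : ∀ j, A *ᵥ P.col j = d j • P.col j) :
    Pᵀ * A * P = diagonal d := by
  ext i j
  have hentry : (Pᵀ * A * P) i j = d j * (P.col i ⬝ᵥ P.col j) := by
    calc (Pᵀ * A * P) i j = P.col i ⬝ᵥ A *ᵥ P.col j := by rw [Matrix.mul_assoc]; rfl
      _ = d j * (P.col i ⬝ᵥ P.col j) := by rw [heigen, dotProduct_smul, smul_eq_mul]
  rcases eq_or_ne i j with rfl | hij
  · rw [hentry, hnorm, mul_one, diagonal_apply_eq]
  · rw [hentry, horth hij, mul_zero, diagonal_apply_ne d hij]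

theorem Mmat_mulVec_apply {q : ℕ} (μ : ℝ) (v : Fin q → ℝ) (k : Fin q) :
    (Mmat q μ *ᵥ v) k = v k - (∑ l, v l) / q + if (k : ℕ) + 1 = q then μ * v k else 0 := by
  have hterm (l : Fin q) : Mmat q μ k l * v l =
      (if k = l then v l else 0) - v l / q +
        if k = l then (if (k : ℕ) + 1 = q then μ * v l else 0) else 0 := by
    have hlast : ((k : ℕ) + 1 = q ∧ (l : ℕ) + 1 = q) ↔ k = l ∧ (k : ℕ) + 1 = q := by
      rw [Fin.ext_iff]
      omega
    rw [Mmat, of_apply, if_congr hlast rfl rfl, ite_and]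
    split_ifs <;> ring
  simp only [mulVec, dotProduct, hterm, sum_add_distrib, sum_sub_distrib, ← sum_div,
    sum_ite_eq, mem_univ, if_true]

section Alpha

variable {q : ℕ}

theorem alphaVec_apply_of_lt {i : ℕ} {k : Fin q} (hk : (k : ℕ) < i) :
    alphaVec q i k = (√((i : ℝ) * (i + 1)))⁻¹ := by
  simp [alphaVec, hk]

theorem alphaVec_apply_self (i : Fin q) :
    alphaVec q i i = -((√((i : ℝ) * (i + 1)))⁻¹ * (i : ℝ)) := by
  simp [alphaVec]

theorem alphaVec_apply_of_gt {i : ℕ} {k : Fin q} (hk : i < (k : ℕ)) : alphaVec q i k = 0 := by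
  simp [alphaVec, hk.not_gt, hk.ne']

theorem alphaVec_dotProduct (i : Fin q) (v : Fin q → ℝ) :
    alphaVec q i ⬝ᵥ v = (√((i : ℝ) * (i + 1)))⁻¹ * (∑ k ∈ Iio i, v k - i * v i) := by
  have hterm (k : Fin q) : alphaVec q i k * v k =
      (√((i : ℝ) * (i + 1)))⁻¹ * ((if k < i then v k else 0) - if k = i then i * v k else 0) := by
    rcases lt_trichotomy k i with hk | rfl | hk
    · simp [alphaVec_apply_of_lt hk, hk, hk.ne]
    · simp [alphaVec_apply_self, mul_assoc]
    · simp [alphaVec_apply_of_gt hk, hk.not_gt, hk.ne']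
  simp only [dotProduct, hterm, ← mul_sum, sum_sub_distrib, sum_ite_eq', mem_univ, if_true]
  rw [← sum_filter, filter_gt_eq_Iio]

theorem alphaVec_dotProduct_eq_zero {i : Fin q} {v : Fin q → ℝ} {c : ℝ}
    (hv : ∀ k ≤ i, v k = c) : alphaVec q i ⬝ᵥ v = 0 := by
  have hsum : ∑ k ∈ Iio i, v k = i * c := by
    rw [sum_congr rfl fun k hk ↦ hv k (mem_Iio.1 hk).le, sum_const, Fin.card_Iio, nsmul_eq_mul]
  rw [alphaVec_dotProduct, hsum, hv i le_rfl, sub_self, mul_zero]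

theorem alphaVec_dotProduct_alphaVec_of_lt {i : Fin q} {j : ℕ} (hij : i < j) :
    alphaVec q i ⬝ᵥ alphaVec q j = 0 :=
  alphaVec_dotProduct_eq_zero fun _ hk ↦ alphaVec_apply_of_lt (lt_of_le_of_lt hk hij)

theorem alphaVec_dotProduct_self {i : Fin q} (hi : 0 < (i : ℕ)) :
    alphaVec q i ⬝ᵥ alphaVec q i = 1 := by
  have hpos : 0 < (i : ℝ) * (i + 1) := by positivity
  have hsum : ∑ k ∈ Iio i, alphaVec q i k = i * (√((i : ℝ) * (i + 1)))⁻¹ := by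
    rw [sum_congr rfl fun k hk ↦ alphaVec_apply_of_lt (Fin.lt_def.1 (mem_Iio.1 hk)), sum_const,
      Fin.card_Iio, nsmul_eq_mul]
  calc alphaVec q i ⬝ᵥ alphaVec q i
      = (√((i : ℝ) * (i + 1)))⁻¹ ^ 2 * (i * (i + 1)) := by
        rw [alphaVec_dotProduct, hsum, alphaVec_apply_self]
        ring
    _ = 1 := by rw [inv_pow, sq_sqrt hpos.le, inv_mul_cancel₀ hpos.ne']

theorem sum_alphaVec (i : Fin q) : ∑ k, alphaVec q i k = 0 := by
  rw [← dotProduct_one]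
  exact alphaVec_dotProduct_eq_zero fun _ _ ↦ rfl

theorem Mmat_mulVec_alphaVec (μ : ℝ) {i : Fin q} (hi : (i : ℕ) + 1 < q) :
    Mmat q μ *ᵥ alphaVec q i = alphaVec q i := by
  ext k
  rw [Mmat_mulVec_apply, sum_alphaVec, zero_div, sub_zero, add_eq_left, ite_eq_right_iff]
  intro hk
  rw [alphaVec_apply_of_gt (by omega), mul_zero]

end Alpha

section OnesWithLast

variable {R : Type*}

/-- The vector `(1, …, 1, x)` of length `q`. The vector `β_j` is the normalization of
`onesWithLast q (x_j)`. -/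
def onesWithLast [One R] (q : ℕ) (x : R) : Fin q → R :=
  fun k ↦ if (k : ℕ) + 1 = q then x else 1

theorem sum_onesWithLast [AddCommGroupWithOne R] {q : ℕ} (hq : q ≠ 0) (x : R) :
    ∑ k, onesWithLast q x k = q - 1 + x := by
  obtain ⟨n, rfl⟩ := Nat.exists_eq_succ_of_ne_zero hq
  have hne (k : Fin n) : (k : ℕ) ≠ n := k.isLt.ne
  simp [onesWithLast, Fin.sum_univ_castSucc, hne]

theorem onesWithLast_dotProduct_onesWithLast [NonAssocRing R] {q : ℕ} (hq : q ≠ 0) (x y : R) :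
    onesWithLast q x ⬝ᵥ onesWithLast q y = q - 1 + x * y := by
  rw [← sum_onesWithLast hq]
  refine sum_congr rfl fun k _ ↦ ?_
  simp only [onesWithLast]
  split_ifs <;> simp

theorem Mmat_mulVec_onesWithLast {q : ℕ} (hq : q ≠ 0) {μ m : ℝ}
    (hm : q * m * (1 + μ - m) = μ) :
    Mmat q μ *ᵥ onesWithLast q (1 - q * m) = m • onesWithLast q (1 - q * m) := by
  have hmean : (∑ k, onesWithLast q (1 - q * m) k) / q = 1 - m := by
    rw [sum_onesWithLast hq]
    field_simp
    ring
  ext k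
  rw [Mmat_mulVec_apply, hmean, Pi.smul_apply, smul_eq_mul]
  simp only [onesWithLast]
  split_ifs
  · linear_combination -hm
  · ring

end OnesWithLast

section Eigenvalues

variable {q : ℕ} (μ : ℝ)

theorem mJ_discriminant_nonneg (hq : q ≠ 0) : 0 ≤ μ ^ 2 - (4 / (q : ℝ) - 2) * μ + 1 := by
  have hq_one : (1 : ℝ) ≤ q := mod_cast Nat.one_le_iff_ne_zero.2 hq
  calc 0 ≤ (μ + 1 - 2 / q) ^ 2 + 4 * (q - 1) / (q : ℝ) ^ 2 := by
        have := sub_nonneg.2 hq_one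
        positivity
    _ = μ ^ 2 - (4 / (q : ℝ) - 2) * μ + 1 := by
        field_simp
        ring

theorem mJ_quadratic (hq : q ≠ 0) (j : ℕ) : q * mJ q μ j * (1 + μ - mJ q μ j) = μ := by
  have hsign : ((-1 : ℝ) ^ (j + 1)) ^ 2 = 1 := by rw [pow_right_comm, neg_one_sq, one_pow]
  have hsqrt := sq_sqrt (mJ_discriminant_nonneg μ hq)
  have hcancel : (q : ℝ) * (4 / q) = 4 := by field_simp
  simp only [mJ, lamJ]
  linear_combination -(q / 4 * √(μ ^ 2 - (4 / (q : ℝ) - 2) * μ + 1) ^ 2) * hsign -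
    q / 4 * hsqrt + μ / 4 * hcancel

theorem mJ_one_add_mJ_two : mJ q μ 1 + mJ q μ 2 = 1 + μ := by
  simp only [mJ, lamJ]
  ring

theorem mJ_one_mul_mJ_two (hq : q ≠ 0) : q * mJ q μ 1 * mJ q μ 2 = μ := by
  rw [eq_sub_of_add_eq' (mJ_one_add_mJ_two μ), mJ_quadratic μ hq 1]

theorem xJ_one_mul_xJ_two (hq : q ≠ 0) : xJ q μ 1 * xJ q μ 2 = 1 - q := by
  simp only [xJ]
  linear_combination q * mJ_one_mul_mJ_two μ hq - q * mJ_one_add_mJ_two (q := q) μ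

end Eigenvalues

section Beta

variable {q : ℕ} (μ : ℝ)

theorem betaVec_eq_smul_onesWithLast (j : ℕ) :
    betaVec q μ j = (√((q : ℝ) - 1 + xJ q μ j ^ 2))⁻¹ • onesWithLast q (xJ q μ j) :=
  rfl

theorem betaVec_dotProduct_self (hq : 2 ≤ q) (j : ℕ) : betaVec q μ j ⬝ᵥ betaVec q μ j = 1 := by
  have hpos : 0 < (q : ℝ) - 1 + xJ q μ j ^ 2 := by
    have : (2 : ℝ) ≤ q := mod_cast hq
    nlinarith [sq_nonneg (xJ q μ j)]
  rw [betaVec_eq_smul_onesWithLast, smul_dotProduct, dotProduct_smul,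
    onesWithLast_dotProduct_onesWithLast (by omega), smul_eq_mul, smul_eq_mul, ← mul_assoc,
    ← mul_inv, mul_self_sqrt hpos.le, ← sq, inv_mul_cancel₀ hpos.ne']

theorem betaVec_one_dotProduct_betaVec_two (hq : q ≠ 0) :
    betaVec q μ 1 ⬝ᵥ betaVec q μ 2 = 0 := by
  have horth : onesWithLast q (xJ q μ 1) ⬝ᵥ onesWithLast q (xJ q μ 2) = 0 := by
    rw [onesWithLast_dotProduct_onesWithLast hq, xJ_one_mul_xJ_two μ hq]
    ring
  simp only [betaVec_eq_smul_onesWithLast, smul_dotProduct, dotProduct_smul, horth, smul_zero]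

theorem alphaVec_dotProduct_betaVec {i : Fin q} (hi : (i : ℕ) + 1 < q) (j : ℕ) :
    alphaVec q i ⬝ᵥ betaVec q μ j = 0 := by
  have hone {k : Fin q} (hk : k ≤ i) : onesWithLast q (xJ q μ j) k = 1 := if_neg (by omega)
  rw [betaVec_eq_smul_onesWithLast, dotProduct_smul,
    alphaVec_dotProduct_eq_zero fun _ ↦ hone, smul_zero]

theorem Mmat_mulVec_betaVec (hq : q ≠ 0) (j : ℕ) :
    Mmat q μ *ᵥ betaVec q μ j = mJ q μ j • betaVec q μ j := by
  rw [betaVec_eq_smul_onesWithLast, mulVec_smul, xJ,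
    Mmat_mulVec_onesWithLast hq (mJ_quadratic μ hq j), smul_comm]

end Beta

section Columns

variable {q : ℕ} (μ : ℝ)

theorem LambdaMat_col (c : Fin q) :
    (LambdaMat q μ).col c =
      if (c : ℕ) < q - 2 then alphaVec q (c + 1)
      else if (c : ℕ) = q - 2 then betaVec q μ 1
      else betaVec q μ 2 := by
  ext k
  simp only [col_apply, LambdaMat, of_apply]
  split_ifs <;> rfl

theorem LambdaMat_col_dotProduct_self (hq : 2 ≤ q) (c : Fin q) :
    (LambdaMat q μ).col c ⬝ᵥ (LambdaMat q μ).col c = 1 := by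
  rw [LambdaMat_col]
  split_ifs
  · exact alphaVec_dotProduct_self (i := ⟨c + 1, by omega⟩) c.succ_pos
  · exact betaVec_dotProduct_self μ hq 1
  · exact betaVec_dotProduct_self μ hq 2

theorem LambdaMat_col_dotProduct_of_lt {c d : Fin q} (hcd : c < d) :
    (LambdaMat q μ).col c ⬝ᵥ (LambdaMat q μ).col d = 0 := by
  rw [LambdaMat_col, LambdaMat_col]
  by_cases hc : (c : ℕ) < q - 2
  · rw [if_pos hc]
    split_ifs
    · exact alphaVec_dotProduct_alphaVec_of_lt (i := ⟨c + 1, by omega⟩) (Nat.succ_lt_succ hcd)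
    · exact alphaVec_dotProduct_betaVec μ (i := ⟨c + 1, by omega⟩) (by grind) 1
    · exact alphaVec_dotProduct_betaVec μ (i := ⟨c + 1, by omega⟩) (by grind) 2
  · rw [if_neg hc, if_pos (by omega), if_neg (by omega), if_neg (by omega)]
    exact betaVec_one_dotProduct_betaVec_two μ (by omega)

theorem pairwise_LambdaMat_col_dotProduct :
    Pairwise fun c d ↦ (LambdaMat q μ).col c ⬝ᵥ (LambdaMat q μ).col d = 0 := by
  intro c d hcd
  rcases hcd.lt_or_gt with hlt | hgt
  · exact LambdaMat_col_dotProduct_of_lt μ hlt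
  · rw [dotProduct_comm]
    exact LambdaMat_col_dotProduct_of_lt μ hgt

theorem Mmat_mulVec_LambdaMat_col (c : Fin q) :
    Mmat q μ *ᵥ (LambdaMat q μ).col c =
      (if (c : ℕ) < q - 2 then 1 else if (c : ℕ) = q - 2 then mJ q μ 1 else mJ q μ 2) •
        (LambdaMat q μ).col c := by
  have hq : q ≠ 0 := c.pos.ne'
  rw [LambdaMat_col]
  split_ifs
  · rw [one_smul]
    exact Mmat_mulVec_alphaVec μ (i := ⟨c + 1, by omega⟩) (by grind)
  · exact Mmat_mulVec_betaVec μ hq 1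
  · exact Mmat_mulVec_betaVec μ hq 2

end Columns

theorem Lambda_diagonalizes_M_general (q : ℕ) (hq : 2 ≤ q) (μ : ℝ) :
    (LambdaMat q μ)ᵀ * Mmat q μ * LambdaMat q μ = Dmat q μ :=
  transpose_mul_mul_eq_diagonal (LambdaMat_col_dotProduct_self μ hq)
    (pairwise_LambdaMat_col_dotProduct μ) (Mmat_mulVec_LambdaMat_col μ)

/-- Corollary 2 of the paper.
`(Λ^(q))ᵀ·M^(q)·Λ^(q) = D^(q) = diag(1, …, 1, m_1, m_2)`. -/
theorem Lambda_diagonalizes_M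
    (q : ℕ) (hq : 2 ≤ q) (μ : ℝ) (hμ : 0 < μ) :
    (LambdaMat q μ)ᵀ * Mmat q μ * LambdaMat q μ = Dmat q μ :=
  Lambda_diagonalizes_M_general q hq μ

end
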